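/- Sharpness of the non-conforming lower bound: let ṽ ∈ L²(Ω;ℝ^N), E := ∇û − A^{−1}ṽ with Helmholtz decomposition E = g + A^{−1}ψ, g ∈ 𝒢, ψ ∈ D₀. Then (i) there exists φ* ∈ H¹°₋₁(Ω) with ∇φ* = g and M₋(A^{−1}ṽ, φ*) = 2∫_Ω f φ* dx − ∫_Ω A∇φ*·∇φ* dx − 2∫_Ω ṽ·∇φ* dx = ‖g‖²_A; (ii) for every u ∈ L²₋₁(Ω) with weak gradient in L²(Ω;ℝ^N) such that û − u ∈ H¹°₋₁(Ω), the choice v = ψ gives M̃₋(A^{−1}ṽ, A^{−1}ψ, ∇u) = ∫_Ω (2∇u − A^{−1}(2ṽ + ψ))·ψ dx = ‖A^{−1}ψ‖²_A. Consequently the sum of these two attained lower bounds equals ‖∇û − A^{−1}ṽ‖²_A. -/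

import Mathlib

open MeasureTheory Filter Topology
open scoped RealInnerProductSpace

noncomputable section

/-- Euclidean space `ℝ^N`. -/
abbrev Euc (N : ℕ) := EuclideanSpace ℝ (Fin N)

/-- The Poincaré constant `c_N = 2/(N-2)`. -/
def cN (N : ℕ) : ℝ := 2 / ((N : ℝ) - 2)

variable {N : ℕ}

/-- Squared weighted `L²_s(Ω)` norm: `∫_Ω (1+|x|²)^s u(x)² dx`. -/
def sqL2 (Ω : Set (Euc N)) (s : ℝ) (u : Euc N → ℝ) : ℝ :=
  ∫ x in Ω, (1 + ‖x‖ ^ 2) ^ s * u x ^ 2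

/-- Weighted `L²_s(Ω)` norm. -/
def nrmL2 (Ω : Set (Euc N)) (s : ℝ) (u : Euc N → ℝ) : ℝ :=
  Real.sqrt (sqL2 Ω s u)

/-- Membership in the weighted space `L²_s(Ω)` (scalar functions). -/
def MemL2 (Ω : Set (Euc N)) (s : ℝ) (u : Euc N → ℝ) : Prop :=
  AEStronglyMeasurable u (volume.restrict Ω) ∧
    Integrable (fun x => (1 + ‖x‖ ^ 2) ^ s * u x ^ 2) (volume.restrict Ω)

/-- Squared weighted `L²_s(Ω;ℝ^N)` norm for vector fields. -/
def sqL2V (Ω : Set (Euc N)) (s : ℝ) (v : Euc N → Euc N) : ℝ :=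
  ∫ x in Ω, (1 + ‖x‖ ^ 2) ^ s * ‖v x‖ ^ 2

/-- Weighted `L²_s(Ω;ℝ^N)` norm for vector fields. -/
def nrmL2V (Ω : Set (Euc N)) (s : ℝ) (v : Euc N → Euc N) : ℝ :=
  Real.sqrt (sqL2V Ω s v)

/-- Membership in the weighted space `L²_s(Ω;ℝ^N)` (vector fields). -/
def MemL2V (Ω : Set (Euc N)) (s : ℝ) (v : Euc N → Euc N) : Prop :=
  AEStronglyMeasurable v (volume.restrict Ω) ∧
    Integrable (fun x => (1 + ‖x‖ ^ 2) ^ s * ‖v x‖ ^ 2) (volume.restrict Ω)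

/-- Test functions: `φ ∈ C_c^∞(Ω)`. -/
def IsTest (Ω : Set (Euc N)) (φ : Euc N → ℝ) : Prop :=
  ContDiff ℝ (⊤ : ℕ∞) φ ∧ HasCompactSupport φ ∧ tsupport φ ⊆ Ω

/-- `g` is the weak gradient of `u` on `Ω`:
`∫_Ω u ∇φ = −∫_Ω φ g` for all test functions `φ`. -/
def IsWeakGrad (Ω : Set (Euc N)) (u : Euc N → ℝ) (g : Euc N → Euc N) : Prop :=
  ∀ φ : Euc N → ℝ, IsTest Ω φ →
    (∫ x in Ω, u x • gradient φ x) = - ∫ x in Ω, φ x • g x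

/-- `d` is the weak divergence of the vector field `v` on `Ω`:
`∫_Ω v·∇φ = −∫_Ω d φ` for all test functions `φ`. -/
def IsWeakDiv (Ω : Set (Euc N)) (v : Euc N → Euc N) (d : Euc N → ℝ) : Prop :=
  ∀ φ : Euc N → ℝ, IsTest Ω φ →
    (∫ x in Ω, ⟪v x, gradient φ x⟫) = - ∫ x in Ω, d x * φ x

/-- `u ∈ H¹°₋₁(Ω)` with weak gradient `g`: `u ∈ L²₋₁(Ω)`, `g ∈ L²(Ω;ℝ^N)` is the weak
gradient of `u`, and `u` is approximated by test functions in the natural norms. -/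
def MemH10 (Ω : Set (Euc N)) (u : Euc N → ℝ) (g : Euc N → Euc N) : Prop :=
  MemL2 Ω (-1) u ∧ MemL2V Ω 0 g ∧ IsWeakGrad Ω u g ∧
    ∃ φ : ℕ → Euc N → ℝ, (∀ n, IsTest Ω (φ n)) ∧
      Tendsto (fun n => nrmL2 Ω (-1) (fun x => u x - φ n x)) atTop (𝓝 0) ∧
      Tendsto (fun n => nrmL2V Ω 0 (fun x => g x - gradient (φ n) x)) atTop (𝓝 0)

/-- `g ∈ 𝒢`, the closure in `L²(Ω;ℝ^N)` of `{∇φ : φ ∈ C_c^∞(Ω)}`. -/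
def MemG (Ω : Set (Euc N)) (g : Euc N → Euc N) : Prop :=
  MemL2V Ω 0 g ∧
    ∃ φ : ℕ → Euc N → ℝ, (∀ n, IsTest Ω (φ n)) ∧
      Tendsto (fun n => nrmL2V Ω 0 (fun x => g x - gradient (φ n) x)) atTop (𝓝 0)

/-- `ψ ∈ D₀`, the set of weakly divergence-free fields in `L²(Ω;ℝ^N)`. -/
def MemD0 (Ω : Set (Euc N)) (ψ : Euc N → Euc N) : Prop :=
  MemL2V Ω 0 ψ ∧
    ∀ φ : Euc N → ℝ, IsTest Ω φ → (∫ x in Ω, ⟪ψ x, gradient φ x⟫) = 0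

/-- The coefficient matrix field `A : Ω → ℝ^{N×N}`: measurable, essentially bounded,
symmetric, and uniformly coercive (`A(x)ξ·ξ ≥ α⁻²|ξ|²` for a.e. `x ∈ Ω`). -/
structure Coeff (N : ℕ) (Ω : Set (Euc N)) where
  A : Euc N → Euc N →L[ℝ] Euc N
  α : ℝ
  α_pos : 0 < α
  meas : ∀ ξ : Euc N, AEStronglyMeasurable (fun x => A x ξ) (volume.restrict Ω)
  bdd : ∃ C : ℝ, ∀ᵐ x ∂(volume.restrict Ω), ∀ ξ : Euc N, ‖A x ξ‖ ≤ C * ‖ξ‖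
  symm : ∀ x : Euc N, ∀ ξ η : Euc N, ⟪A x ξ, η⟫ = ⟪ξ, A x η⟫
  coer : ∀ᵐ x ∂(volume.restrict Ω), ∀ ξ : Euc N, α⁻¹ ^ 2 * ‖ξ‖ ^ 2 ≤ ⟪A x ξ, ξ⟫

/-- The weighted inner product `⟨v,w⟩_A = ∫_Ω A v · w dx`. -/
def ipA (Ω : Set (Euc N)) (A : Euc N → Euc N →L[ℝ] Euc N) (v w : Euc N → Euc N) : ℝ :=
  ∫ x in Ω, ⟪A x (v x), w x⟫

/-- The squared `A`-weighted norm `‖v‖²_A = ∫_Ω A v · v dx`. -/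
def sqA (Ω : Set (Euc N)) (A : Euc N → Euc N →L[ℝ] Euc N) (v : Euc N → Euc N) : ℝ :=
  ipA Ω A v v

/-- The `A`-weighted norm `‖v‖_A`. -/
def nrmA (Ω : Set (Euc N)) (A : Euc N → Euc N →L[ℝ] Euc N) (v : Euc N → Euc N) : ℝ :=
  Real.sqrt (sqA Ω A v)

/-- `w = A⁻¹ v` (a.e. on `Ω`), with `w ∈ L²(Ω;ℝ^N)`. -/
def IsAInv (Ω : Set (Euc N)) (A : Euc N → Euc N →L[ℝ] Euc N) (v w : Euc N → Euc N) : Prop :=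
  MemL2V Ω 0 w ∧ ∀ᵐ x ∂(volume.restrict Ω), A x (w x) = v x

/-!
Integrating the divergence of `φ² x / (1 + |x|²)` and completing the square gives Hardy's inequality
`∫ φ² / (1 + |x|²) ≤ c_N² ∫ |∇φ|²` for test functions. Hence `L²`-limits of their gradients are
gradients of elements of `H¹°₋₁(Ω)`, so that `g = ∇φ*`. By density the weak formulation may be
tested with `φ*`, and `D₀` is orthogonal to `𝒢`. Since `A∇û = ṽ + A g + ψ`, both bounds and
Pythagoras' identity follow by expanding the integrands and dropping the integrals of `ψ` against
elements of `𝒢`.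
-/

section LpTwo

variable {X ι E : Type*} [MeasurableSpace X] {μ : Measure X}
  [NormedAddCommGroup E] [InnerProductSpace ℝ E]

lemma norm_toLp_two {v : X → E} (hv : MemLp v 2 μ) :
    ‖hv.toLp v‖ = √(∫ x, ‖v x‖ ^ 2 ∂μ) := by
  have hsq : ‖hv.toLp v‖ ^ 2 = ∫ x, ‖v x‖ ^ 2 ∂μ := by
    rw [← real_inner_self_eq_norm_sq, L2.inner_def]
    refine integral_congr_ae ?_
    filter_upwards [hv.coeFn_toLp] with x hx
    rw [hx, real_inner_self_eq_norm_sq]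
  rw [← hsq, Real.sqrt_sq (norm_nonneg _)]

lemma inner_toLp_two {v w : X → E} (hv : MemLp v 2 μ) (hw : MemLp w 2 μ) :
    ⟪hv.toLp v, hw.toLp w⟫ = ∫ x, ⟪v x, w x⟫ ∂μ := by
  rw [L2.inner_def]
  refine integral_congr_ae ?_
  filter_upwards [hv.coeFn_toLp, hw.coeFn_toLp] with x hx hy
  rw [hx, hy]

lemma integrable_inner_of_memLp_two {v w : X → E} (hv : MemLp v 2 μ) (hw : MemLp w 2 μ) :
    Integrable (fun x => ⟪v x, w x⟫) μ := by
  refine (L2.integrable_inner (𝕜 := ℝ) (hv.toLp v) (hw.toLp w)).congr ?_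
  filter_upwards [hv.coeFn_toLp, hw.coeFn_toLp] with x hx hy
  rw [hx, hy]

lemma dist_toLp_two {v w : X → E} (hv : MemLp v 2 μ) (hw : MemLp w 2 μ) :
    dist (hv.toLp v) (hw.toLp w) = √(∫ x, ‖v x - w x‖ ^ 2 ∂μ) := by
  rw [dist_eq_norm, ← MemLp.toLp_sub, norm_toLp_two]
  rfl

lemma tendsto_toLp_two_iff {l : Filter ι} {v : X → E} {vn : ι → X → E} (hv : MemLp v 2 μ)
    (hvn : ∀ n, MemLp (vn n) 2 μ) :
    Tendsto (fun n => (hvn n).toLp (vn n)) l (𝓝 (hv.toLp v)) ↔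
      Tendsto (fun n => √(∫ x, ‖v x - vn n x‖ ^ 2 ∂μ)) l (𝓝 0) := by
  rw [tendsto_iff_dist_tendsto_zero]
  simp only [dist_comm _ (hv.toLp v), dist_toLp_two]

lemma tendsto_integral_inner {l : Filter ι} {v w : X → E} {vn : ι → X → E} (hw : MemLp w 2 μ)
    (hv : MemLp v 2 μ) (hvn : ∀ n, MemLp (vn n) 2 μ)
    (hlim : Tendsto (fun n => √(∫ x, ‖v x - vn n x‖ ^ 2 ∂μ)) l (𝓝 0)) :
    Tendsto (fun n => ∫ x, ⟪w x, vn n x⟫ ∂μ) l (𝓝 (∫ x, ⟪w x, v x⟫ ∂μ)) := by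
  simp only [← inner_toLp_two hw hv, ← inner_toLp_two hw (hvn _)]
  exact tendsto_const_nhds.inner ((tendsto_toLp_two_iff hv hvn).2 hlim)

lemma tendsto_sqrt_integral_norm_sub_sq {v : X → E} {vn : ℕ → X → E} (hv : MemLp v 2 μ)
    (hvn : ∀ n, MemLp (vn n) 2 μ)
    (hlim : Tendsto (fun n => √(∫ x, ‖v x - vn n x‖ ^ 2 ∂μ)) atTop (𝓝 0)) :
    Tendsto (fun k : ℕ × ℕ => √(∫ x, ‖vn k.1 x - vn k.2 x‖ ^ 2 ∂μ)) atTop (𝓝 0) := by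
  simpa only [dist_toLp_two] using
    cauchySeq_iff_tendsto_dist_atTop_0.1 ((tendsto_toLp_two_iff hv hvn).2 hlim).cauchySeq

lemma exists_memLp_two_tendsto [CompleteSpace E] {vn : ℕ → X → E} (hvn : ∀ n, MemLp (vn n) 2 μ)
    (hcauchy : Tendsto (fun k : ℕ × ℕ => √(∫ x, ‖vn k.1 x - vn k.2 x‖ ^ 2 ∂μ)) atTop (𝓝 0)) :
    ∃ v : X → E, MemLp v 2 μ ∧ Tendsto (fun n => √(∫ x, ‖v x - vn n x‖ ^ 2 ∂μ)) atTop (𝓝 0) := by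
  have hseq : CauchySeq fun n => (hvn n).toLp (vn n) := by
    rw [cauchySeq_iff_tendsto_dist_atTop_0]
    simpa only [dist_toLp_two] using hcauchy
  obtain ⟨v, hv⟩ := cauchySeq_tendsto_of_complete hseq
  rw [← Lp.toLp_coeFn v (Lp.memLp v)] at hv
  exact ⟨v, Lp.memLp v, (tendsto_toLp_two_iff (Lp.memLp v) hvn).1 hv⟩

end LpTwo

section ClmApply

variable {X E F : Type*} [MeasurableSpace X] {μ : Measure X}
  [NormedAddCommGroup E] [NormedSpace ℝ E] [FiniteDimensional ℝ E]
  [NormedAddCommGroup F] [NormedSpace ℝ F] {A : X → E →L[ℝ] F} {v : X → E}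

lemma aestronglyMeasurable_clm_apply (hA : ∀ ξ, AEStronglyMeasurable (fun x => A x ξ) μ)
    (hv : AEStronglyMeasurable v μ) : AEStronglyMeasurable (fun x => A x (v x)) μ := by
  let b := Module.finBasis ℝ E
  have hexpand : (fun x => A x (v x)) = fun x => ∑ i, b.coord i (v x) • A x (b i) := by
    ext x
    conv_lhs => rw [← b.sum_repr (v x), map_sum]
    simp only [map_smul, Module.Basis.coord_apply]
  rw [hexpand]
  refine Finset.aestronglyMeasurable_fun_sum _ fun i _ => ?_
  exact ((b.coord i).continuous_of_finiteDimensional.comp_aestronglyMeasurable hv).smul (hA _)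

lemma memLp_clm_apply {p : ENNReal} {C : ℝ} (hA : ∀ ξ, AEStronglyMeasurable (fun x => A x ξ) μ)
    (hC : ∀ᵐ x ∂μ, ∀ ξ, ‖A x ξ‖ ≤ C * ‖ξ‖) (hv : MemLp v p μ) :
    MemLp (fun x => A x (v x)) p μ :=
  hv.of_le_mul (aestronglyMeasurable_clm_apply hA hv.1) (hC.mono fun x hx => hx (v x))

end ClmApply

section Gradient

variable {E : Type*} [NormedAddCommGroup E] [InnerProductSpace ℝ E] [CompleteSpace E]
  {φ η : E → ℝ}

lemma gradient_eq_zero_of_notMem_tsupport {x : E} (hx : x ∉ tsupport φ) : gradient φ x = 0 := by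
  rw [gradient, fderiv_of_notMem_tsupport ℝ hx, map_zero]

lemma hasCompactSupport_gradient (hφ : HasCompactSupport φ) : HasCompactSupport (gradient φ) :=
  HasCompactSupport.intro hφ fun _ => gradient_eq_zero_of_notMem_tsupport

lemma continuous_gradient (hφ : ContDiff ℝ 1 φ) : Continuous (gradient φ) :=
  (LinearIsometryEquiv.continuous _).comp (hφ.continuous_fderiv one_ne_zero)

lemma gradient_sub {x : E} (hφ : DifferentiableAt ℝ φ x) (hη : DifferentiableAt ℝ η x) :
    gradient (fun y => φ y - η y) x = gradient φ x - gradient η x := by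
  rw [gradient, fderiv_fun_sub hφ hη, map_sub, gradient, gradient]

end Gradient

section Hardy

open Module (finrank)

lemma integral_fderiv_apply_self {E F : Type*} [NormedAddCommGroup E] [NormedSpace ℝ E]
    [FiniteDimensional ℝ E] [MeasurableSpace E] [BorelSpace E] (μ : Measure E)
    [μ.IsAddHaarMeasure] [NormedAddCommGroup F] [NormedSpace ℝ F] {h : E → F}
    (hh : ContDiff ℝ 1 h) (hsupp : HasCompactSupport h) :
    ∫ x, fderiv ℝ h x x ∂μ = -((finrank ℝ E : ℝ) • ∫ x, h x ∂μ) := by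
  let b := Module.finBasis ℝ E
  let ℓ (i : Fin (finrank ℝ E)) : E →L[ℝ] ℝ := (b.coord i).toContinuousLinearMap
  have hint (i) : Integrable (fun x => ℓ i x • fderiv ℝ h x (b i)) μ :=
    ((ℓ i).continuous.smul ((hh.continuous_fderiv one_ne_zero).clm_apply
      continuous_const)).integrable_of_hasCompactSupport (hsupp.fderiv_apply ℝ _).smul_left
  have hparts (i) : ∫ x, ℓ i x • fderiv ℝ h x (b i) ∂μ = -∫ x, h x ∂μ := by
    have hℓ (x) : fderiv ℝ (ℓ i) x (b i) = 1 := by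
      rw [(ℓ i).fderiv]
      simp [ℓ]
    rw [integral_smul_fderiv_eq_neg_fderiv_smul_of_integrable _ (hint i) _
      (fun x _ => (ℓ i).differentiableAt) (fun x _ => hh.differentiable one_ne_zero x)]
    · simp only [hℓ, one_smul]
    · simpa only [hℓ, one_smul] using hh.continuous.integrable_of_hasCompactSupport hsupp
    · exact ((ℓ i).continuous.smul hh.continuous).integrable_of_hasCompactSupport hsupp.smul_left
  have hexpand (x) : fderiv ℝ h x x = ∑ i, ℓ i x • fderiv ℝ h x (b i) := by
    conv_lhs => rw [← b.sum_repr x, map_sum]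
    simp [ℓ]
  simp_rw [hexpand]
  rw [integral_finsetSum _ fun i _ => hint i]
  simp [hparts, Nat.cast_smul_eq_nsmul]

variable {E : Type*} [NormedAddCommGroup E] [InnerProductSpace ℝ E] {φ : E → ℝ}

lemma contDiff_sq_div_one_add_norm_sq {n : WithTop ℕ∞} (hφ : ContDiff ℝ n φ) :
    ContDiff ℝ n fun x => φ x ^ 2 / (1 + ‖x‖ ^ 2) :=
  (hφ.pow 2).div (contDiff_const.add (contDiff_id.norm_sq ℝ)) fun x => by positivity

lemma fderiv_sq_div_one_add_norm_sq_apply_self [CompleteSpace E] {x : E}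
    (hφ : DifferentiableAt ℝ φ x) :
    fderiv ℝ (fun y => φ y ^ 2 / (1 + ‖y‖ ^ 2)) x x =
      2 * φ x * ⟪gradient φ x, x⟫ / (1 + ‖x‖ ^ 2) -
        2 * φ x ^ 2 * ‖x‖ ^ 2 / (1 + ‖x‖ ^ 2) ^ 2 := by
  have hden : HasFDerivAt (fun y : E => 1 + ‖y‖ ^ 2) _ x :=
    (hasStrictFDerivAt_norm_sq x).hasFDerivAt.const_add 1
  have hinv : HasFDerivAt (fun y : E => (1 + ‖y‖ ^ 2)⁻¹) _ x :=
    (hasDerivAt_inv (by positivity)).comp_hasFDerivAt x hden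
  simp only [div_eq_mul_inv, inner_gradient_left]
  rw [((hφ.hasFDerivAt.pow 2).fun_mul hinv).fderiv]
  simp only [neg_smul, smul_neg, Nat.add_one_sub_one, pow_one, nsmul_eq_mul, Nat.cast_ofNat,
    add_apply, neg_apply, smul_apply, coe_innerSL_apply, real_inner_self_eq_norm_sq, smul_eq_mul]
  ring

/-- Applied with `f = φ x`, `a = ∇φ(x) · x`, `G = |∇φ(x)|` and `r = |x|`. -/
lemma hardy_integrand_le {d f a G r : ℝ} (hd : 2 < d) (ha : |a| ≤ G * r) :
    (d - 2) / 2 * (f ^ 2 / (1 + r ^ 2)) - 2 / (d - 2) * G ^ 2 ≤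
      2 * f * a / (1 + r ^ 2) - 2 * f ^ 2 * r ^ 2 / (1 + r ^ 2) ^ 2 +
        d * (f ^ 2 / (1 + r ^ 2)) := by
  have hm : 0 < d - 2 := by linarith
  have ht : 0 < 1 + r ^ 2 := by positivity
  have hsq : a ^ 2 / (1 + r ^ 2) ≤ G ^ 2 := by
    rw [div_le_iff₀ ht]
    nlinarith [sq_le_sq' (by linarith [neg_abs_le a]) ((le_abs_self a).trans ha), sq_nonneg G]
  have hdiff : 2 * f * a / (1 + r ^ 2) - 2 * f ^ 2 * r ^ 2 / (1 + r ^ 2) ^ 2 +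
        d * (f ^ 2 / (1 + r ^ 2)) -
        ((d - 2) / 2 * (f ^ 2 / (1 + r ^ 2)) - 2 / (d - 2) * G ^ 2) =
      (d - 2) / 2 * (f + 2 / (d - 2) * a) ^ 2 / (1 + r ^ 2) +
        2 * f ^ 2 / (1 + r ^ 2) ^ 2 + 2 / (d - 2) * (G ^ 2 - a ^ 2 / (1 + r ^ 2)) := by
    field_simp
    ring
  have hrest : 0 ≤ 2 / (d - 2) * (G ^ 2 - a ^ 2 / (1 + r ^ 2)) :=
    mul_nonneg (by positivity) (sub_nonneg.2 hsq)
  rw [← sub_nonneg, hdiff]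
  exact add_nonneg (by positivity) hrest

variable [FiniteDimensional ℝ E] [MeasurableSpace E] [BorelSpace E]

theorem integral_sq_div_one_add_norm_sq_le (μ : Measure E) [μ.IsAddHaarMeasure]
    (hdim : 2 < finrank ℝ E) (hφ : ContDiff ℝ 1 φ) (hsupp : HasCompactSupport φ) :
    ∫ x, φ x ^ 2 / (1 + ‖x‖ ^ 2) ∂μ ≤
      (2 / ((finrank ℝ E : ℝ) - 2)) ^ 2 * ∫ x, ‖gradient φ x‖ ^ 2 ∂μ := by
  set d : ℝ := ((finrank ℝ E : ℕ) : ℝ)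
  have hd : 2 < d := Nat.ofNat_lt_cast.2 hdim
  set k : E → ℝ := fun x => φ x ^ 2 / (1 + ‖x‖ ^ 2) with hk
  have hkC : ContDiff ℝ 1 k := contDiff_sq_div_one_add_norm_sq hφ
  have hksupp : HasCompactSupport k :=
    HasCompactSupport.intro hsupp fun x hx => by
      simp [hk, image_eq_zero_of_notMem_tsupport hx]
  have hk_int : Integrable k μ := hkC.continuous.integrable_of_hasCompactSupport hksupp
  have hgrad_int : Integrable (fun x => ‖gradient φ x‖ ^ 2) μ :=
    ((continuous_gradient hφ).memLp_of_hasCompactSupport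
      (hasCompactSupport_gradient hsupp)).integrable_norm_pow two_ne_zero
  have hfderiv_int : Integrable (fun x => fderiv ℝ k x x) μ :=
    ((hkC.continuous_fderiv one_ne_zero).clm_apply continuous_id).integrable_of_hasCompactSupport
      (HasCompactSupport.intro hksupp fun x hx => by simp [fderiv_of_notMem_tsupport ℝ hx])
  have hpointwise (x) : (d - 2) / 2 * k x - 2 / (d - 2) * ‖gradient φ x‖ ^ 2 ≤
      fderiv ℝ k x x + d * k x := by
    rw [fderiv_sq_div_one_add_norm_sq_apply_self (hφ.differentiable one_ne_zero x)]
    exact hardy_integrand_le hd (abs_real_inner_le_norm _ _)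
  have hint : (d - 2) / 2 * ∫ x, k x ∂μ - 2 / (d - 2) * ∫ x, ‖gradient φ x‖ ^ 2 ∂μ ≤ 0 := by
    have hmono := integral_mono ((hk_int.const_mul _).sub (hgrad_int.const_mul _))
      (hfderiv_int.add (hk_int.const_mul d)) hpointwise
    simp only [Pi.sub_apply, Pi.add_apply] at hmono
    rwa [integral_sub (hk_int.const_mul _) (hgrad_int.const_mul _),
      integral_add hfderiv_int (hk_int.const_mul _), integral_const_mul, integral_const_mul,
      integral_const_mul, integral_fderiv_apply_self μ hkC hksupp, smul_eq_mul,
      neg_add_cancel] at hmono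
  have hm : 0 < d - 2 := by linarith
  calc ∫ x, k x ∂μ = 2 / (d - 2) * ((d - 2) / 2 * ∫ x, k x ∂μ) := by field_simp
    _ ≤ 2 / (d - 2) * (2 / (d - 2) * ∫ x, ‖gradient φ x‖ ^ 2 ∂μ) :=
      mul_le_mul_of_nonneg_left (sub_nonpos.1 hint) (by positivity)
    _ = (2 / (d - 2)) ^ 2 * ∫ x, ‖gradient φ x‖ ^ 2 ∂μ := by ring

end Hardy

section WeightedSpaces

/-- The weight `⟨x⟩^s`, where `⟨x⟩ = (1 + |x|²)^(1/2)`: multiplication by it is an isometry of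
`L²_s` onto `L²`. -/
def bracketPow {E : Type*} [NormedAddCommGroup E] (s : ℝ) (x : E) : ℝ :=
  (1 + ‖x‖ ^ 2) ^ (s / 2)

section BracketPow

variable {E : Type*} [NormedAddCommGroup E]

lemma bracketPow_sq (s : ℝ) (x : E) : bracketPow s x ^ 2 = (1 + ‖x‖ ^ 2) ^ s := by
  rw [bracketPow, ← Real.rpow_mul_natCast (by positivity)]
  norm_num

lemma bracketPow_mul_bracketPow_neg (s : ℝ) (x : E) :
    bracketPow s x * bracketPow (-s) x = 1 := by
  rw [bracketPow, bracketPow, ← Real.rpow_add (by positivity), neg_div, add_neg_cancel,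
    Real.rpow_zero]

lemma continuous_bracketPow (s : ℝ) : Continuous (bracketPow s : E → ℝ) :=
  (by fun_prop : Continuous fun x : E => 1 + ‖x‖ ^ 2).rpow_const fun x => Or.inl (by positivity)

end BracketPow

variable {Ω : Set (Euc N)} {s : ℝ} {u f : Euc N → ℝ} {v w : Euc N → Euc N}

lemma weight_mul_sq (s : ℝ) (x : Euc N) (t : ℝ) :
    (1 + ‖x‖ ^ 2) ^ s * t ^ 2 = ‖bracketPow s x * t‖ ^ 2 := by
  rw [Real.norm_eq_abs, sq_abs, mul_pow, bracketPow_sq]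

lemma aestronglyMeasurable_bracketPow_mul (hu : AEStronglyMeasurable u (volume.restrict Ω)) :
    AEStronglyMeasurable (fun x => bracketPow s x * u x) (volume.restrict Ω) :=
  (continuous_bracketPow s).aestronglyMeasurable.mul hu

lemma memL2_iff_memLp :
    MemL2 Ω s u ↔ MemLp (fun x => bracketPow s x * u x) 2 (volume.restrict Ω) := by
  have hcancel : (fun x => bracketPow (-s) x * (bracketPow s x * u x)) = u := by
    ext x
    rw [← mul_assoc, mul_comm (bracketPow _ _), bracketPow_mul_bracketPow_neg, one_mul]
  simp only [MemL2, weight_mul_sq]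
  constructor
  · rintro ⟨hmeas, hint⟩
    exact (memLp_two_iff_integrable_sq_norm (aestronglyMeasurable_bracketPow_mul hmeas)).2 hint
  · intro h
    refine ⟨?_, (memLp_two_iff_integrable_sq_norm h.1).1 h⟩
    simpa only [hcancel] using aestronglyMeasurable_bracketPow_mul (s := -s) h.1

lemma memL2V_zero_iff_memLp : MemL2V Ω 0 v ↔ MemLp v 2 (volume.restrict Ω) := by
  simp only [MemL2V, Real.rpow_zero, one_mul]
  exact ⟨fun h => (memLp_two_iff_integrable_sq_norm h.1).2 h.2,
    fun h => ⟨h.1, (memLp_two_iff_integrable_sq_norm h.1).1 h⟩⟩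

lemma nrmL2_sub_eq (η : Euc N → ℝ) : nrmL2 Ω s (fun x => u x - η x) =
    √(∫ x in Ω, ‖bracketPow s x * u x - bracketPow s x * η x‖ ^ 2) := by
  simp only [nrmL2, sqL2, weight_mul_sq, mul_sub]

lemma nrmL2V_zero_eq : nrmL2V Ω 0 v = √(∫ x in Ω, ‖v x‖ ^ 2) := by
  simp only [nrmL2V, sqL2V, Real.rpow_zero, one_mul]

lemma memL2_of_hasCompactSupport (hu : Continuous u) (hsupp : HasCompactSupport u) :
    MemL2 Ω s u :=
  memL2_iff_memLp.2 <|
    ((continuous_bracketPow s).mul hu).memLp_of_hasCompactSupport hsupp.mul_left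

lemma memL2V_zero_of_hasCompactSupport (hv : Continuous v) (hsupp : HasCompactSupport v) :
    MemL2V Ω 0 v :=
  memL2V_zero_iff_memLp.2 (hv.memLp_of_hasCompactSupport hsupp)

lemma MemL2.locallyIntegrable (hu : MemL2 Ω s u) : LocallyIntegrable u (volume.restrict Ω) := by
  have hloc := (memL2_iff_memLp.1 hu).locallyIntegrable one_le_two
  rw [← locallyIntegrableOn_univ] at hloc ⊢
  refine (hloc.continuousOn_mul (continuous_bracketPow (-s)).continuousOn
    isOpen_univ.isLocallyClosed).congr (ae_of_all _ fun x => ?_)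
  rw [← mul_assoc, mul_comm (bracketPow _ _), bracketPow_mul_bracketPow_neg, one_mul]

lemma MemL2V.locallyIntegrable (hv : MemL2V Ω 0 v) : LocallyIntegrable v (volume.restrict Ω) :=
  (memL2V_zero_iff_memLp.1 hv).locallyIntegrable one_le_two

lemma MemL2V.sub (hv : MemL2V Ω 0 v) (hw : MemL2V Ω 0 w) : MemL2V Ω 0 fun x => v x - w x :=
  memL2V_zero_iff_memLp.2 ((memL2V_zero_iff_memLp.1 hv).sub (memL2V_zero_iff_memLp.1 hw))

lemma MemL2V.integrable_inner (hv : MemL2V Ω 0 v) (hw : MemL2V Ω 0 w) :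
    Integrable (fun x => ⟪v x, w x⟫) (volume.restrict Ω) :=
  integrable_inner_of_memLp_two (memL2V_zero_iff_memLp.1 hv) (memL2V_zero_iff_memLp.1 hw)

lemma tendsto_integral_inner_of_tendsto_nrmL2V {ι : Type*} {l : Filter ι}
    {vn : ι → Euc N → Euc N} (hw : MemL2V Ω 0 w) (hv : MemL2V Ω 0 v)
    (hvn : ∀ n, MemL2V Ω 0 (vn n))
    (hlim : Tendsto (fun n => nrmL2V Ω 0 fun x => v x - vn n x) l (𝓝 0)) :
    Tendsto (fun n => ∫ x in Ω, ⟪w x, vn n x⟫) l (𝓝 (∫ x in Ω, ⟪w x, v x⟫)) := by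
  simp only [memL2V_zero_iff_memLp, nrmL2V_zero_eq] at hw hv hvn hlim
  exact tendsto_integral_inner hw hv hvn hlim

lemma tendsto_integral_mul_of_tendsto_nrmL2 {ι : Type*} {l : Filter ι} {un : ι → Euc N → ℝ}
    (hf : MemL2 Ω s f) (hu : MemL2 Ω (-s) u) (hun : ∀ n, MemL2 Ω (-s) (un n))
    (hlim : Tendsto (fun n => nrmL2 Ω (-s) fun x => u x - un n x) l (𝓝 0)) :
    Tendsto (fun n => ∫ x in Ω, f x * un n x) l (𝓝 (∫ x in Ω, f x * u x)) := by
  have hpair (η : Euc N → ℝ) (x : Euc N) :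
      ⟪bracketPow s x * f x, bracketPow (-s) x * η x⟫ = f x * η x := by
    calc bracketPow (-s) x * η x * (bracketPow s x * f x)
        = bracketPow s x * bracketPow (-s) x * (f x * η x) := by ring
      _ = f x * η x := by rw [bracketPow_mul_bracketPow_neg, one_mul]
  simp only [memL2_iff_memLp, nrmL2_sub_eq] at hf hu hun hlim
  simpa only [hpair] using tendsto_integral_inner hf hu hun hlim

lemma tendsto_nrmL2V_sub_of_tendsto {vn : ℕ → Euc N → Euc N} (hv : MemL2V Ω 0 v)
    (hvn : ∀ n, MemL2V Ω 0 (vn n))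
    (hlim : Tendsto (fun n => nrmL2V Ω 0 fun x => v x - vn n x) atTop (𝓝 0)) :
    Tendsto (fun k : ℕ × ℕ => nrmL2V Ω 0 fun x => vn k.1 x - vn k.2 x) atTop (𝓝 0) := by
  simp only [memL2V_zero_iff_memLp, nrmL2V_zero_eq] at hv hvn hlim ⊢
  exact tendsto_sqrt_integral_norm_sub_sq hv hvn hlim

lemma exists_memL2_tendsto_nrmL2 {un : ℕ → Euc N → ℝ} (hun : ∀ n, MemL2 Ω s (un n))
    (hcauchy : Tendsto (fun k : ℕ × ℕ => nrmL2 Ω s fun x => un k.1 x - un k.2 x) atTop (𝓝 0)) :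
    ∃ u, MemL2 Ω s u ∧ Tendsto (fun n => nrmL2 Ω s fun x => u x - un n x) atTop (𝓝 0) := by
  simp only [memL2_iff_memLp, nrmL2_sub_eq] at hun hcauchy ⊢
  obtain ⟨v, hv, hlim⟩ := exists_memLp_two_tendsto hun hcauchy
  have hcancel (x) : bracketPow s x * (bracketPow (-s) x * v x) = v x := by
    rw [← mul_assoc, bracketPow_mul_bracketPow_neg, one_mul]
  exact ⟨fun x => bracketPow (-s) x * v x, by simpa only [hcancel] using hv,
    by simpa only [hcancel] using hlim⟩

end WeightedSpaces

section TestFunctions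

variable {Ω : Set (Euc N)} {s : ℝ} {φ η : Euc N → ℝ}

lemma IsTest.contDiff_one (hφ : IsTest Ω φ) : ContDiff ℝ 1 φ :=
  hφ.1.of_le (by simp)

lemma IsTest.sub (hφ : IsTest Ω φ) (hη : IsTest Ω η) : IsTest Ω fun x => φ x - η x :=
  ⟨hφ.1.sub hη.1, hφ.2.1.sub hη.2.1,
    (tsupport_sub φ η).trans (Set.union_subset hφ.2.2 hη.2.2)⟩

lemma IsTest.gradient_sub (hφ : IsTest Ω φ) (hη : IsTest Ω η) (x : Euc N) :
    gradient (fun y => φ y - η y) x = gradient φ x - gradient η x :=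
  _root_.gradient_sub (hφ.contDiff_one.differentiable one_ne_zero x)
    (hη.contDiff_one.differentiable one_ne_zero x)

lemma IsTest.eq_zero_of_notMem (hφ : IsTest Ω φ) {x : Euc N} (hx : x ∉ Ω) : φ x = 0 :=
  image_eq_zero_of_notMem_tsupport fun h => hx (hφ.2.2 h)

lemma IsTest.gradient_eq_zero_of_notMem (hφ : IsTest Ω φ) {x : Euc N} (hx : x ∉ Ω) :
    gradient φ x = 0 :=
  gradient_eq_zero_of_notMem_tsupport fun h => hx (hφ.2.2 h)

lemma IsTest.memL2 (hφ : IsTest Ω φ) : MemL2 Ω s φ :=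
  memL2_of_hasCompactSupport hφ.1.continuous hφ.2.1

lemma IsTest.memL2V_gradient (hφ : IsTest Ω φ) : MemL2V Ω 0 (gradient φ) :=
  memL2V_zero_of_hasCompactSupport (continuous_gradient hφ.contDiff_one)
    (hasCompactSupport_gradient hφ.2.1)

lemma IsTest.nrmL2_neg_one_le (hN : 3 ≤ N) (hφ : IsTest Ω φ) :
    nrmL2 Ω (-1) φ ≤ cN N * nrmL2V Ω 0 (gradient φ) := by
  have hcN : 0 ≤ cN N := by
    have : (3 : ℝ) ≤ N := mod_cast hN
    exact div_nonneg zero_le_two (by linarith)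
  have hhardy := integral_sq_div_one_add_norm_sq_le (volume : Measure (Euc N))
    (by rwa [finrank_euclideanSpace_fin]) hφ.contDiff_one hφ.2.1
  rw [finrank_euclideanSpace_fin, ← cN] at hhardy
  have hweight (x : Euc N) : (1 + ‖x‖ ^ 2) ^ (-1 : ℝ) * φ x ^ 2 = φ x ^ 2 / (1 + ‖x‖ ^ 2) := by
    rw [Real.rpow_neg_one, inv_mul_eq_div]
  rw [nrmL2V_zero_eq, nrmL2, sqL2]
  simp only [hweight]
  rw [← Real.sqrt_sq hcN, ← Real.sqrt_mul (sq_nonneg _),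
    setIntegral_eq_integral_of_forall_compl_eq_zero fun x hx => by
      simp [hφ.eq_zero_of_notMem hx],
    setIntegral_eq_integral_of_forall_compl_eq_zero fun x hx => by
      simp [hφ.gradient_eq_zero_of_notMem hx]]
  exact Real.sqrt_le_sqrt hhardy

end TestFunctions

section WeakGradient

variable {Ω : Set (Euc N)} {s : ℝ} {φ u : Euc N → ℝ} {g : Euc N → Euc N}

lemma isWeakGrad_iff_forall_inner (hu : LocallyIntegrable u (volume.restrict Ω))
    (hg : LocallyIntegrable g (volume.restrict Ω)) :
    IsWeakGrad Ω u g ↔ ∀ η : Euc N → ℝ, IsTest Ω η → ∀ c : Euc N,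
      ∫ x in Ω, ⟪c, gradient η x⟫ * u x = -∫ x in Ω, ⟪η x • c, g x⟫ := by
  refine forall₂_congr fun η hη => ?_
  have hu_int : Integrable (fun x => u x • gradient η x) (volume.restrict Ω) :=
    hu.integrable_smul_right_of_hasCompactSupport (continuous_gradient hη.contDiff_one)
      (hasCompactSupport_gradient hη.2.1)
  have hg_int : Integrable (fun x => η x • g x) (volume.restrict Ω) :=
    hg.integrable_smul_left_of_hasCompactSupport hη.1.continuous hη.2.1
  rw [ext_iff_inner_left ℝ]
  refine forall_congr' fun c => ?_
  rw [inner_neg_right, ← integral_inner hu_int, ← integral_inner hg_int]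
  simp only [inner_smul_right, real_inner_smul_left, mul_comm (u _)]

lemma isWeakGrad_gradient (hφ : ContDiff ℝ 1 φ) : IsWeakGrad Ω φ (gradient φ) := by
  rw [isWeakGrad_iff_forall_inner hφ.continuous.locallyIntegrable
    (continuous_gradient hφ).locallyIntegrable]
  intro η hη c
  have hη' : Continuous fun x => fderiv ℝ η x c :=
    (hη.contDiff_one.continuous_fderiv one_ne_zero).clm_apply continuous_const
  have hφ' : Continuous fun x => fderiv ℝ φ x c :=
    (hφ.continuous_fderiv one_ne_zero).clm_apply continuous_const
  rw [setIntegral_eq_integral_of_forall_compl_eq_zero fun x hx => by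
      simp [hη.gradient_eq_zero_of_notMem hx],
    setIntegral_eq_integral_of_forall_compl_eq_zero fun x hx => by
      simp [hη.eq_zero_of_notMem hx]]
  have hleft (x) : ⟪c, gradient η x⟫ * φ x = φ x * fderiv ℝ η x c := by
    rw [real_inner_comm, inner_gradient_left, mul_comm]
  have hright (x) : ⟪η x • c, gradient φ x⟫ = fderiv ℝ φ x c * η x := by
    rw [real_inner_comm, inner_smul_right, inner_gradient_left, mul_comm]
  simp only [hleft, hright]
  exact integral_mul_fderiv_eq_neg_fderiv_mul_of_integrable
    ((hφ'.mul hη.1.continuous).integrable_of_hasCompactSupport hη.2.1.mul_left)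
    ((hφ.continuous.mul hη').integrable_of_hasCompactSupport
      (hη.2.1.fderiv_apply ℝ c).mul_left)
    ((hφ.continuous.mul hη.1.continuous).integrable_of_hasCompactSupport hη.2.1.mul_left)
    (fun x _ => hφ.differentiable one_ne_zero x)
    (fun x _ => hη.contDiff_one.differentiable one_ne_zero x)

lemma isWeakGrad_of_tendsto {ι : Type*} {l : Filter ι} [l.NeBot] {un : ι → Euc N → ℝ}
    {gn : ι → Euc N → Euc N} (hu : MemL2 Ω s u) (hun : ∀ n, MemL2 Ω s (un n))
    (hg : MemL2V Ω 0 g) (hgn : ∀ n, MemL2V Ω 0 (gn n)) (hgrad : ∀ n, IsWeakGrad Ω (un n) (gn n))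
    (hulim : Tendsto (fun n => nrmL2 Ω s fun x => u x - un n x) l (𝓝 0))
    (hglim : Tendsto (fun n => nrmL2V Ω 0 fun x => g x - gn n x) l (𝓝 0)) :
    IsWeakGrad Ω u g := by
  obtain ⟨t, rfl⟩ : ∃ t, s = -t := ⟨-s, (neg_neg s).symm⟩
  rw [isWeakGrad_iff_forall_inner hu.locallyIntegrable hg.locallyIntegrable]
  intro η hη c
  have hc : MemL2 Ω t fun x => ⟪c, gradient η x⟫ :=
    memL2_of_hasCompactSupport (continuous_const.inner (continuous_gradient hη.contDiff_one))
      ((hasCompactSupport_gradient hη.2.1).comp_left (inner_zero_right c))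
  have hηc : MemL2V Ω 0 fun x => η x • c :=
    memL2V_zero_of_hasCompactSupport (hη.1.continuous.smul continuous_const)
      hη.2.1.smul_right
  refine tendsto_nhds_unique (tendsto_integral_mul_of_tendsto_nrmL2 hc hu hun hulim) ?_
  refine (tendsto_integral_inner_of_tendsto_nrmL2V hηc hg hgn hglim).neg.congr fun n => ?_
  exact ((isWeakGrad_iff_forall_inner (hun n).locallyIntegrable
    (hgn n).locallyIntegrable).1 (hgrad n) η hη c).symm

end WeakGradient

section Potentials

variable {Ω : Set (Euc N)} {w f : Euc N → ℝ} {g ψ v : Euc N → Euc N}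

lemma MemH10.memG (hw : MemH10 Ω w g) : MemG Ω g :=
  let ⟨_, hg, _, φ, hφ, _, hlim⟩ := hw
  ⟨hg, φ, hφ, hlim⟩

theorem MemG.exists_memH10 (hN : 3 ≤ N) (hg : MemG Ω g) : ∃ w, MemH10 Ω w g := by
  obtain ⟨hg2, φ, hφ, hglim⟩ := hg
  have hφ_cauchy :
      Tendsto (fun k : ℕ × ℕ => nrmL2 Ω (-1) fun x => φ k.1 x - φ k.2 x) atTop (𝓝 0) := by
    refine squeeze_zero (fun k => Real.sqrt_nonneg _)
      (fun k => ((hφ k.1).sub (hφ k.2)).nrmL2_neg_one_le hN) ?_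
    have hgrad_sub (k : ℕ × ℕ) : gradient (fun x => φ k.1 x - φ k.2 x) =
        fun x => gradient (φ k.1) x - gradient (φ k.2) x :=
      funext ((hφ k.1).gradient_sub (hφ k.2))
    simp only [hgrad_sub]
    simpa only [mul_zero] using
      (tendsto_nrmL2V_sub_of_tendsto hg2 (fun n => (hφ n).memL2V_gradient) hglim).const_mul (cN N)
  obtain ⟨w, hw, hwlim⟩ := exists_memL2_tendsto_nrmL2 (fun n => (hφ n).memL2) hφ_cauchy
  have hgrad : IsWeakGrad Ω w g :=
    isWeakGrad_of_tendsto hw (fun n => (hφ n).memL2) hg2 (fun n => (hφ n).memL2V_gradient)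
      (fun n => isWeakGrad_gradient (hφ n).contDiff_one) hwlim hglim
  exact ⟨w, hw, hg2, hgrad, φ, hφ, hwlim, hglim⟩

lemma MemH10.integral_inner_eq_integral_mul (hw : MemH10 Ω w g) (hv : MemL2V Ω 0 v)
    (hf : MemL2 Ω 1 f)
    (hweak : ∀ φ, IsTest Ω φ → ∫ x in Ω, ⟪v x, gradient φ x⟫ = ∫ x in Ω, f x * φ x) :
    ∫ x in Ω, ⟪v x, g x⟫ = ∫ x in Ω, f x * w x := by
  obtain ⟨hw2, hg, -, φ, hφ, hwlim, hglim⟩ := hw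
  refine tendsto_nhds_unique
    (tendsto_integral_inner_of_tendsto_nrmL2V hv hg (fun n => (hφ n).memL2V_gradient) hglim) ?_
  simp only [hweak _ (hφ _)]
  exact tendsto_integral_mul_of_tendsto_nrmL2 hf hw2 (fun n => (hφ n).memL2) hwlim

lemma MemD0.integral_inner_eq_zero (hψ : MemD0 Ω ψ) (hg : MemG Ω g) :
    ∫ x in Ω, ⟪ψ x, g x⟫ = 0 := by
  obtain ⟨hg2, φ, hφ, hlim⟩ := hg
  refine tendsto_nhds_unique
    (tendsto_integral_inner_of_tendsto_nrmL2V hψ.1 hg2 (fun n => (hφ n).memL2V_gradient) hlim) ?_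
  simp only [hψ.2 _ (hφ _)]
  exact tendsto_const_nhds

end Potentials

section Energy

variable {Ω : Set (Euc N)} {A : Euc N → Euc N →L[ℝ] Euc N} {d g h v w ψ : Euc N → Euc N}

lemma memL2V_clm_apply {C : ℝ}
    (hmeas : ∀ ξ, AEStronglyMeasurable (fun x => A x ξ) (volume.restrict Ω))
    (hC : ∀ᵐ x ∂(volume.restrict Ω), ∀ ξ, ‖A x ξ‖ ≤ C * ‖ξ‖) (hv : MemL2V Ω 0 v) :
    MemL2V Ω 0 fun x => A x (v x) :=
  memL2V_zero_iff_memLp.2 (memLp_clm_apply hmeas hC (memL2V_zero_iff_memLp.1 hv))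

lemma sqA_add_of_ipA_eq_zero
    (hsymm : ∀ᵐ x ∂(volume.restrict Ω), ∀ ξ η, ⟪A x ξ, η⟫ = ⟪ξ, A x η⟫)
    (hv : MemL2V Ω 0 v) (hw : MemL2V Ω 0 w) (hAv : MemL2V Ω 0 fun x => A x (v x))
    (hAw : MemL2V Ω 0 fun x => A x (w x)) (horth : ipA Ω A w v = 0) :
    sqA Ω A (fun x => v x + w x) = sqA Ω A v + sqA Ω A w := by
  have hvv := hAv.integrable_inner hv
  have hww := hAw.integrable_inner hw
  have hwv := hAw.integrable_inner hv
  have hsum : Integrable (fun x => ⟪A x (v x), v x⟫ + ⟪A x (w x), w x⟫) (volume.restrict Ω) :=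
    hvv.add hww
  calc sqA Ω A (fun x => v x + w x)
      = ∫ x in Ω, (⟪A x (v x), v x⟫ + ⟪A x (w x), w x⟫ + 2 * ⟪A x (w x), v x⟫) := by
        refine integral_congr_ae ?_
        filter_upwards [hsymm] with x hx
        simp only [map_add, inner_add_left, inner_add_right, hx (v x) (w x),
          real_inner_comm (A x (w x)) (v x)]
        ring
    _ = sqA Ω A v + sqA Ω A w + 2 * ipA Ω A w v := by
        rw [integral_add hsum (hwv.const_mul 2), integral_add hvv hww, integral_const_mul]
        rfl
    _ = sqA Ω A v + sqA Ω A w := by rw [horth, mul_zero, add_zero]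

lemma integral_inner_add_eq_of_memD0 (hg : MemG Ω g) (hψ : MemD0 Ω ψ) (hv : MemL2V Ω 0 v)
    (hAg : MemL2V Ω 0 fun x => A x (g x)) :
    ∫ x in Ω, ⟪v x + A x (g x) + ψ x, g x⟫ = (∫ x in Ω, ⟪v x, g x⟫) + sqA Ω A g := by
  have hvg := hv.integrable_inner hg.1
  have hgg := hAg.integrable_inner hg.1
  have hsum : Integrable (fun x => ⟪v x, g x⟫ + ⟪A x (g x), g x⟫) (volume.restrict Ω) :=
    hvg.add hgg
  simp only [inner_add_left]
  rw [integral_add hsum (hψ.1.integrable_inner hg.1), integral_add hvg hgg,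
    hψ.integral_inner_eq_zero hg, add_zero]
  rfl

lemma integral_inner_add_sub_eq_sqA (hg : MemG Ω g) (hd : MemG Ω d) (hψ : MemD0 Ω ψ)
    (hh : MemL2V Ω 0 h) (hAh : ∀ᵐ x ∂(volume.restrict Ω), A x (h x) = ψ x) :
    ∫ x in Ω, ⟪h x + (2 : ℝ) • g x - (2 : ℝ) • d x, ψ x⟫ = sqA Ω A h := by
  have hhψ := hψ.1.integrable_inner hh
  have hgψ := (hψ.1.integrable_inner hg.1).const_mul 2
  have hdψ := (hψ.1.integrable_inner hd.1).const_mul 2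
  have hsum : Integrable (fun x => ⟪ψ x, h x⟫ + 2 * ⟪ψ x, g x⟫) (volume.restrict Ω) :=
    hhψ.add hgψ
  calc ∫ x in Ω, ⟪h x + (2 : ℝ) • g x - (2 : ℝ) • d x, ψ x⟫
      = ∫ x in Ω, (⟪ψ x, h x⟫ + 2 * ⟪ψ x, g x⟫ - 2 * ⟪ψ x, d x⟫) := by
        simp only [real_inner_comm (ψ _), inner_sub_right, inner_add_right, inner_smul_right]
    _ = ∫ x in Ω, ⟪ψ x, h x⟫ := by
        rw [integral_sub hsum hdψ, integral_add hhψ hgψ, integral_const_mul, integral_const_mul,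
          hψ.integral_inner_eq_zero hg, hψ.integral_inner_eq_zero hd]
        ring
    _ = sqA Ω A h := integral_congr_ae (by filter_upwards [hAh] with x hx; rw [hx])

end Energy

theorem stmt_15_general {Ω : Set (Euc N)} (hN : 3 ≤ N) {A : Euc N → Euc N →L[ℝ] Euc N}
    (hmeas : ∀ ξ, AEStronglyMeasurable (fun x => A x ξ) (volume.restrict Ω))
    (hbdd : ∃ C : ℝ, ∀ᵐ x ∂(volume.restrict Ω), ∀ ξ, ‖A x ξ‖ ≤ C * ‖ξ‖)
    (hsymm : ∀ᵐ x ∂(volume.restrict Ω), ∀ ξ η, ⟪A x ξ, η⟫ = ⟪ξ, A x η⟫)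
    {f : Euc N → ℝ} (hf : MemL2 Ω 1 f) {p : Euc N → Euc N} (hp : MemL2V Ω 0 p)
    (hweak : ∀ φ, IsTest Ω φ → ∫ x in Ω, ⟪A x (p x), gradient φ x⟫ = ∫ x in Ω, f x * φ x)
    {vt wt : Euc N → Euc N} (hwt : IsAInv Ω A vt wt) {g ψ : Euc N → Euc N} (hg : MemG Ω g)
    (hψ : MemD0 Ω ψ) (hdec : ∀ᵐ x ∂(volume.restrict Ω), A x ((p x - wt x) - g x) = ψ x) :
    (∃ φs, MemH10 Ω φs g ∧
      2 * (∫ x in Ω, f x * φs x) - (∫ x in Ω, ⟪A x (g x), g x⟫) -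
        2 * (∫ x in Ω, ⟪vt x, g x⟫) = sqA Ω A g) ∧
    (∀ q : Euc N → Euc N, MemG Ω (fun x => p x - q x) →
      ∫ x in Ω, ⟪(2 : ℝ) • q x - ((2 : ℝ) • wt x + ((p x - wt x) - g x)), ψ x⟫ =
        sqA Ω A (fun x => (p x - wt x) - g x)) ∧
    sqA Ω A g + sqA Ω A (fun x => (p x - wt x) - g x) = sqA Ω A (fun x => p x - wt x) := by
  obtain ⟨C, hC⟩ := hbdd
  have hA {v} (hv : MemL2V Ω 0 v) : MemL2V Ω 0 fun x => A x (v x) := memL2V_clm_apply hmeas hC hv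
  have hh : MemL2V Ω 0 fun x => (p x - wt x) - g x := (hp.sub hwt.1).sub hg.1
  refine ⟨?_, fun q hq => ?_, ?_⟩
  · obtain ⟨φs, hφs⟩ := hg.exists_memH10 hN
    have hAp : ∀ᵐ x ∂(volume.restrict Ω), A x (p x) = A x (wt x) + A x (g x) + ψ x := by
      filter_upwards [hdec] with x hx
      rw [← hx, ← map_add, ← map_add, add_assoc, add_sub_cancel, add_sub_cancel]
    have hfφs : ∫ x in Ω, f x * φs x = (∫ x in Ω, ⟪vt x, g x⟫) + sqA Ω A g := by
      rw [← hφs.integral_inner_eq_integral_mul (hA hp) hf hweak,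
        integral_congr_ae (hAp.mono fun x hx => congrArg (⟪·, g x⟫) hx),
        integral_inner_add_eq_of_memD0 hg hψ (hA hwt.1) (hA hg.1),
        integral_congr_ae (hwt.2.mono fun x hx => congrArg (⟪·, g x⟫) hx)]
    refine ⟨φs, hφs, ?_⟩
    rw [hfφs, ← ipA, ← sqA]
    ring
  · rw [← integral_inner_add_sub_eq_sqA hg hq hψ hh hdec]
    congr! 3 with x
    module
  · have horth : ipA Ω A (fun x => (p x - wt x) - g x) g = 0 :=
      (integral_congr_ae (hdec.mono fun x hx => congrArg (⟪·, g x⟫) hx)).trans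
        (hψ.integral_inner_eq_zero hg)
    rw [← sqA_add_of_ipA_eq_zero hsymm hg.1 hh (hA hg.1) (hA hh) horth]
    simp only [add_sub_cancel]

/-- Sharpness of the non-conforming lower bound: the gradient part is attained at `φ*` with
`∇φ* = g`, the solenoidal part at `v = ψ` (where `A⁻¹ψ = E − g` a.e.), and the two attained
bounds sum to `‖E‖²_A`. -/
theorem stmt_15 (Ω : Set (Euc N)) (hΩ : IsOpen Ω) (hN : 3 ≤ N) (M : Coeff N Ω)
    (f : Euc N → ℝ) (hf : MemL2 Ω 1 f)
    (uh : Euc N → ℝ) (gu : Euc N → Euc N)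
    (huh : MemL2 Ω (-1) uh) (hgu : MemL2V Ω 0 gu) (hguw : IsWeakGrad Ω uh gu)
    (hweak : ∀ φ : Euc N → ℝ, IsTest Ω φ →
      (∫ x in Ω, ⟪M.A x (gu x), gradient φ x⟫) = ∫ x in Ω, f x * φ x)
    (vt : Euc N → Euc N) (hvt : MemL2V Ω 0 vt)
    (wt : Euc N → Euc N) (hwt : IsAInv Ω M.A vt wt)
    (g ψ : Euc N → Euc N) (hg : MemG Ω g) (hψ : MemD0 Ω ψ)
    (hdec : ∀ᵐ x ∂(volume.restrict Ω), M.A x ((gu x - wt x) - g x) = ψ x) :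
    (∃ φs : Euc N → ℝ, MemH10 Ω φs g ∧
      2 * (∫ x in Ω, f x * φs x) - (∫ x in Ω, ⟪M.A x (g x), g x⟫) -
          2 * (∫ x in Ω, ⟪vt x, g x⟫) =
        sqA Ω M.A g) ∧
    (∀ (u : Euc N → ℝ) (gu' : Euc N → Euc N),
      MemL2 Ω (-1) u → MemL2V Ω 0 gu' → IsWeakGrad Ω u gu' →
      MemH10 Ω (fun x => uh x - u x) (fun x => gu x - gu' x) →
      (∫ x in Ω, ⟪(2 : ℝ) • gu' x - ((2 : ℝ) • wt x + ((gu x - wt x) - g x)), ψ x⟫) =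
        sqA Ω M.A (fun x => (gu x - wt x) - g x)) ∧
    sqA Ω M.A g + sqA Ω M.A (fun x => (gu x - wt x) - g x) =
      sqA Ω M.A (fun x => gu x - wt x) := by
  obtain ⟨hlower, hupper, hsum⟩ :=
    stmt_15_general hN M.meas M.bdd (ae_of_all _ M.symm) hf hgu hweak hwt hg hψ hdec
  exact ⟨hlower, fun _ gu' _ _ _ hdiff => hupper gu' hdiff.memG, hsum⟩
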